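/- Let γ_ℓ be the optimal value of the linear program LP_ℓ. If ℓ ∈ {1, 2, 3}, then γ_ℓ = 1, and if ℓ ≥ 4, then γ_ℓ < 1. -/

import Mathlib

/-- `ρ_ℓ = ∏_{p prime, p ∣ ℓ} (1 - 1/p)`. -/
noncomputable def rho (ℓ : ℕ) : ℝ :=
  ∏ p ∈ ℓ.primeFactors, (1 - 1 / (p : ℝ))

/-- `α_ℓ` is the maximum over `1 ≤ a ≤ b ≤ 2ℓ` of the number of integers in `[a, b]`
coprime with `ℓ` minus `ρ_ℓ (b - a + 1)`. -/
noncomputable def alpha (ℓ : ℕ) : ℝ :=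
  sSup {x : ℝ | ∃ a b : ℤ, 1 ≤ a ∧ a ≤ b ∧ b ≤ 2 * (ℓ : ℤ) ∧
    x = ((Finset.filter (fun z => Int.gcd z (ℓ : ℤ) = 1) (Finset.Icc a b)).card : ℝ)
      - rho ℓ * ((b : ℝ) - (a : ℝ) + 1)}

/-- `γ_ℓ` is the optimal value of the linear program `LP_ℓ`. -/
noncomputable def gamma (ℓ : ℕ) : ℝ :=
  sSup {x : ℝ | ∃ σ τ : ℕ → ℝ,
    (∀ i, 1 ≤ i → i ≤ ℓ → 0 ≤ σ i ∧ σ i ≤ τ i) ∧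
    (∀ i j, 1 ≤ i → i ≤ ℓ → 1 ≤ j → j ≤ ℓ →
      -1 ≤ (i : ℝ) * τ j - (j : ℝ) * σ i ∧ (i : ℝ) * τ j - (j : ℝ) * σ i ≤ 1) ∧
    x = ∑ i ∈ Finset.Icc 1 ℓ, rho i * (τ i - σ i)}

/-- `β_0 = 1` and `β_ℓ = β_{ℓ-1} + α_ℓ + ρ_ℓ`. -/
noncomputable def beta : ℕ → ℝ
  | 0 => 1
  | n + 1 => beta n + alpha (n + 1) + rho (n + 1)

open Finset in
theorem farey_sum (n : ℕ) (hn : 1 ≤ n) :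
    ∑ i ∈ Icc 1 n, ∑ j ∈ Icc 1 n,
      (if Nat.Coprime i j ∧ n < i + j then 1 / ((i : ℝ) * j) else 0) = 1 := by
  induction n, hn using Nat.le_induction with
  | base => simp
  | succ n hn ih =>
    set g : ℕ → ℝ := fun i => if Nat.Coprime i (n + 1) then 1 / ((i : ℝ) * (n + 1)) else 0 with hg
    set h : ℕ → ℝ := fun i =>
      if Nat.Coprime i (n + 1) then 1 / (((n + 1 - i : ℕ) : ℝ) * (n + 1)) else 0 with hh
    have hrefl : ∑ i ∈ Icc 1 n, h i = ∑ i ∈ Icc 1 n, g i := by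
      refine Finset.sum_nbij' (fun i => n + 1 - i) (fun i => n + 1 - i) ?_ ?_ ?_ ?_ ?_
      · intro i hi; simp only [mem_Icc] at hi ⊢; omega
      · intro i hi; simp only [mem_Icc] at hi ⊢; omega
      · intro i hi; simp only [mem_Icc] at hi ⊢; omega
      · intro i hi; simp only [mem_Icc] at hi ⊢; omega
      · intro i hi
        simp only [mem_Icc] at hi
        have : Nat.Coprime (n + 1 - i) (n + 1) ↔ Nat.Coprime i (n + 1) := by
          rw [Nat.coprime_self_sub_left (by omega)]
        simp only [hg, hh, this]
    have hsingle : ∀ i ∈ Icc 1 n, ∑ j ∈ Icc 1 n,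
        (if Nat.Coprime i j ∧ i + j = n + 1 then 1 / ((i : ℝ) * j) else 0) = g i + h i := by
      intro i hi
      simp only [mem_Icc] at hi
      rw [Finset.sum_eq_single (n + 1 - i)]
      · have : Nat.Coprime i (n + 1 - i) ↔ Nat.Coprime i (n + 1) :=
          Nat.coprime_sub_self_right (by omega)
        have e : i + (n + 1 - i) = n + 1 := by omega
        simp only [hg, hh, this, e, and_true]
        split_ifs
        · have e' : ((n : ℝ) + 1) = i + ((n + 1 - i : ℕ) : ℝ) := by exact_mod_cast e.symm
          have h1 : (0 : ℝ) < i := by exact_mod_cast hi.1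
          have h2 : (0 : ℝ) < ((n + 1 - i : ℕ) : ℝ) := by
            exact_mod_cast (show 0 < n + 1 - i by omega)
          rw [e']
          field_simp
          ring
        · simp
      · intro j _ hj
        rw [if_neg]; rintro ⟨_, h'⟩; omega
      · intro h'; simp only [mem_Icc] at h'; omega
    have hsplit : ∀ i ∈ Icc 1 n, ∑ j ∈ Icc 1 n,
        (if Nat.Coprime i j ∧ n < i + j then 1 / ((i : ℝ) * j) else 0) =
        ∑ j ∈ Icc 1 n,
        (if Nat.Coprime i j ∧ n + 1 < i + j then 1 / ((i : ℝ) * j) else 0) + (g i + h i) := by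
      intro i hi
      rw [← hsingle i hi, ← Finset.sum_add_distrib]
      refine Finset.sum_congr rfl fun j _ => ?_
      by_cases hc : Nat.Coprime i j
      · rcases lt_trichotomy (n + 1) (i + j) with h1 | h1 | h1
        · simp [hc, h1, h1.ne', show n < i + j by omega]
        · simp [hc, ← h1]
        · simp [hc, h1.ne, show ¬ n < i + j by omega, show ¬ n + 1 < i + j by omega]
      · simp [hc]
    rw [Finset.sum_congr rfl hsplit, Finset.sum_add_distrib, Finset.sum_add_distrib, hrefl] at ih
    rw [Finset.sum_Icc_succ_top (by omega), Finset.sum_Icc_succ_top (by omega)]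
    have e1 : ∀ i ∈ Icc 1 n, ∑ j ∈ Icc 1 (n + 1),
        (if Nat.Coprime i j ∧ n + 1 < i + j then 1 / ((i : ℝ) * j) else 0) =
        ∑ j ∈ Icc 1 n,
        (if Nat.Coprime i j ∧ n + 1 < i + j then 1 / ((i : ℝ) * j) else 0) + g i := by
      intro i hi
      simp only [mem_Icc] at hi
      rw [Finset.sum_Icc_succ_top (by omega)]
      simp [hg, show n + 1 < i + (n + 1) by omega, show 0 < i by omega]
    have e2 : ∀ j ∈ Icc 1 n,
        (if Nat.Coprime (n + 1) j ∧ n + 1 < n + 1 + j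
          then 1 / (((n + 1 : ℕ) : ℝ) * j) else 0) = g j := by
      intro j hj
      simp only [mem_Icc] at hj
      simp only [hg, Nat.coprime_comm (n := n + 1), show n + 1 < n + 1 + j by omega, and_true]
      push_cast
      rw [mul_comm]
    have e3 : ¬ (Nat.Coprime (n + 1) (n + 1) ∧ n + 1 < n + 1 + (n + 1)) := by
      rintro ⟨h', _⟩
      rw [Nat.coprime_self] at h'
      omega
    rw [Finset.sum_congr rfl e1, Finset.sum_congr rfl e2, if_neg e3, Finset.sum_add_distrib]
    linarith

open Finset in
theorem farey_row (n i : ℕ) (hi : i ≤ n) (c : ℝ) :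
    ∑ j ∈ Icc 1 n, (if Nat.Coprime i j ∧ n < i + j then c else 0) = (Nat.totient i : ℝ) * c := by
  rw [← Finset.sum_filter, Finset.sum_const, nsmul_eq_mul]
  congr 2
  rw [← Nat.filter_coprime_Ico_eq_totient i (n + 1 - i)]
  congr 1
  ext j
  simp only [mem_filter, mem_Icc, mem_Ico]
  constructor
  · rintro ⟨h1, h2, h3⟩; exact ⟨by omega, h2⟩
  · rintro ⟨h1, h2⟩
    exact ⟨by omega, h2, by omega⟩

theorem rho_mul_self (i : ℕ) : rho i * i = Nat.totient i := by
  have h := Nat.totient_eq_mul_prod_factors i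
  have h' : ((Nat.totient i : ℚ) : ℝ) =
      (((i : ℚ) * ∏ p ∈ i.primeFactors, (1 - (p : ℚ)⁻¹) : ℚ) : ℝ) := by rw [h]
  push_cast at h'
  rw [h', rho, mul_comm]
  simp [one_div]

/-- Slack of a constraint. -/
noncomputable def slack (σ τ : ℕ → ℝ) (i j : ℕ) : ℝ :=
  1 / ((i : ℝ) * j) - (τ i / i - σ j / j)

theorem slack_nonneg (σ τ : ℕ → ℝ) (i j : ℕ) (hi : 1 ≤ i) (hj : 1 ≤ j)
    (h : (j : ℝ) * τ i - (i : ℝ) * σ j ≤ 1) : 0 ≤ slack σ τ i j := by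
  have h1 : (0 : ℝ) < i := by exact_mod_cast hi
  have h2 : (0 : ℝ) < j := by exact_mod_cast hj
  have : slack σ τ i j = (1 - (j * τ i - i * σ j)) / (i * j) := by
    unfold slack; field_simp
  rw [this]
  apply div_nonneg
  · linarith
  · positivity

open Finset in
theorem objective_eq (n : ℕ) (hn : 1 ≤ n) (σ τ : ℕ → ℝ) :
    ∑ i ∈ Icc 1 n, rho i * (τ i - σ i) = 1 - ∑ i ∈ Icc 1 n, ∑ j ∈ Icc 1 n,
      (if Nat.Coprime i j ∧ n < i + j then slack σ τ i j else 0) := by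
  have hT : ∑ i ∈ Icc 1 n, ∑ j ∈ Icc 1 n,
      (if Nat.Coprime i j ∧ n < i + j then τ i / i else 0) = ∑ i ∈ Icc 1 n, rho i * τ i := by
    refine Finset.sum_congr rfl fun i hi => ?_
    simp only [mem_Icc] at hi
    rw [farey_row n i hi.2, ← rho_mul_self]
    have h1 : (0 : ℝ) < i := by exact_mod_cast hi.1
    field_simp
  have hS : ∑ i ∈ Icc 1 n, ∑ j ∈ Icc 1 n,
      (if Nat.Coprime i j ∧ n < i + j then σ j / j else 0) = ∑ i ∈ Icc 1 n, rho i * σ i := by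
    rw [Finset.sum_comm]
    refine Finset.sum_congr rfl fun i hi => ?_
    simp only [mem_Icc] at hi
    have := farey_row n i hi.2 (σ i / i)
    simp only [Nat.coprime_comm (n := i), Nat.add_comm i] at this
    rw [this, ← rho_mul_self]
    have h1 : (0 : ℝ) < i := by exact_mod_cast hi.1
    field_simp
  have hF := farey_sum n hn
  have : ∑ i ∈ Icc 1 n, ∑ j ∈ Icc 1 n,
      (if Nat.Coprime i j ∧ n < i + j then slack σ τ i j else 0) =
      ∑ i ∈ Icc 1 n, ∑ j ∈ Icc 1 n,
        (if Nat.Coprime i j ∧ n < i + j then 1 / ((i : ℝ) * j) else 0)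
      - (∑ i ∈ Icc 1 n, ∑ j ∈ Icc 1 n,
        (if Nat.Coprime i j ∧ n < i + j then τ i / i else 0)
      - ∑ i ∈ Icc 1 n, ∑ j ∈ Icc 1 n,
        (if Nat.Coprime i j ∧ n < i + j then σ j / j else 0)) := by
    simp only [← Finset.sum_sub_distrib]
    refine Finset.sum_congr rfl fun i _ => Finset.sum_congr rfl fun j _ => ?_
    split_ifs <;> simp [slack]
  rw [this, hF, hT, hS]
  simp only [mul_sub, Finset.sum_sub_distrib]
  ring

open Finset in
theorem objective_le_one (n : ℕ) (hn : 1 ≤ n) (σ τ : ℕ → ℝ)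
    (h : ∀ i j, 1 ≤ i → i ≤ n → 1 ≤ j → j ≤ n →
      -1 ≤ (i : ℝ) * τ j - (j : ℝ) * σ i ∧ (i : ℝ) * τ j - (j : ℝ) * σ i ≤ 1) :
    ∑ i ∈ Icc 1 n, rho i * (τ i - σ i) ≤ 1 := by
  rw [objective_eq n hn, sub_le_self_iff]
  refine Finset.sum_nonneg fun i hi => Finset.sum_nonneg fun j hj => ?_
  simp only [mem_Icc] at hi hj
  split_ifs
  · exact slack_nonneg σ τ i j hi.1 hj.1 (h j i hj.1 hj.2 hi.1 hi.2).2
  · exact le_rfl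

open Finset in
theorem objective_le_strict (m : ℕ) (hm : 2 ≤ m) (σ τ : ℕ → ℝ)
    (h : ∀ i j, 1 ≤ i → i ≤ m + 2 → 1 ≤ j → j ≤ m + 2 →
      -1 ≤ (i : ℝ) * τ j - (j : ℝ) * σ i ∧ (i : ℝ) * τ j - (j : ℝ) * σ i ≤ 1) :
    ∑ i ∈ Icc 1 (m + 2), rho i * (τ i - σ i) ≤
      1 - (1 / (m : ℝ) - 1 / ((m + 1 : ℕ) : ℝ)) *
        (1 / ((m + 1 : ℕ) : ℝ) - 1 / ((m + 2 : ℕ) : ℝ)) := by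
  have hs : ∀ i j, 1 ≤ i → i ≤ m + 2 → 1 ≤ j → j ≤ m + 2 → 0 ≤ slack σ τ i j :=
    fun i j h1 h2 h3 h4 => slack_nonneg σ τ i j h1 h3 (h j i h3 h4 h1 h2).2
  rw [objective_eq (m + 2) (by omega), ← Finset.sum_product']
  apply sub_le_sub_left
  have hle : ∑ p ∈ ({(m, m + 1), (m + 1, m + 2)} : Finset (ℕ × ℕ)),
      (if Nat.Coprime p.1 p.2 ∧ m + 2 < p.1 + p.2 then slack σ τ p.1 p.2 else 0) ≤
      ∑ p ∈ Icc 1 (m + 2) ×ˢ Icc 1 (m + 2),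
      (if Nat.Coprime p.1 p.2 ∧ m + 2 < p.1 + p.2 then slack σ τ p.1 p.2 else 0) := by
    apply Finset.sum_le_sum_of_subset_of_nonneg
    · intro p hp
      simp only [mem_insert, mem_singleton] at hp
      rcases hp with rfl | rfl <;> simp only [mem_product, mem_Icc] <;> omega
    · intro p hp _
      simp only [mem_product, mem_Icc] at hp
      split_ifs
      · exact hs _ _ hp.1.1 hp.1.2 hp.2.1 hp.2.2
      · exact le_rfl
  refine le_trans ?_ hle
  rw [Finset.sum_pair (by simp)]
  have c1 : Nat.Coprime m (m + 1) ∧ m + 2 < m + (m + 1) := ⟨by simp, by omega⟩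
  have c2 : Nat.Coprime (m + 1) (m + 2) ∧ m + 2 < m + 1 + (m + 2) :=
    ⟨(Nat.coprime_self_add_right (m := m + 1) (n := 1)).2 (by simp), by omega⟩
  rw [if_pos c1, if_pos c2]
  have a1 := hs m (m + 2) (by omega) (by omega) (by omega) (by omega)
  have a2 := hs (m + 1) (m + 1) (by omega) (by omega) (by omega) (by omega)
  unfold slack at *
  simp only [one_div, mul_inv] at *
  linarith

theorem gamma_le_of (n : ℕ) (B : ℝ)
    (H : ∀ σ τ : ℕ → ℝ, (∀ i j, 1 ≤ i → i ≤ n → 1 ≤ j → j ≤ n →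
      -1 ≤ (i : ℝ) * τ j - (j : ℝ) * σ i ∧ (i : ℝ) * τ j - (j : ℝ) * σ i ≤ 1) →
      ∑ i ∈ Finset.Icc 1 n, rho i * (τ i - σ i) ≤ B) : gamma n ≤ B := by
  unfold gamma
  apply csSup_le
  · exact ⟨_, 0, 0, by simp, by simp, rfl⟩
  · rintro x ⟨σ, τ, _, h, rfl⟩
    exact H σ τ h

theorem gamma_eq_one_of (n : ℕ) (hn : 1 ≤ n) (σ τ : ℕ → ℝ)
    (h0 : ∀ i, 1 ≤ i → i ≤ n → 0 ≤ σ i ∧ σ i ≤ τ i)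
    (h : ∀ i j, 1 ≤ i → i ≤ n → 1 ≤ j → j ≤ n →
      -1 ≤ (i : ℝ) * τ j - (j : ℝ) * σ i ∧ (i : ℝ) * τ j - (j : ℝ) * σ i ≤ 1)
    (hv : 1 = ∑ i ∈ Finset.Icc 1 n, rho i * (τ i - σ i)) : gamma n = 1 := by
  apply le_antisymm
  · exact gamma_le_of n 1 fun σ τ h => objective_le_one n hn σ τ h
  · unfold gamma
    apply le_csSup
    · refine ⟨1, ?_⟩
      rintro x ⟨σ, τ, _, h, rfl⟩
      exact objective_le_one n hn σ τ h
    · exact ⟨σ, τ, h0, h, hv⟩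

theorem gamma_eq_one_iff_small :
    (∀ ℓ ∈ ({1, 2, 3} : Set ℕ), gamma ℓ = 1) ∧
    (∀ ℓ : ℕ, 4 ≤ ℓ → gamma ℓ < 1) := by
  have r1 : rho 1 = 1 := by simp [rho]
  have r2 : rho 2 = 1 / 2 := by
    rw [rho, Nat.Prime.primeFactors Nat.prime_two]; norm_num
  have r3 : rho 3 = 2 / 3 := by
    rw [rho, Nat.Prime.primeFactors Nat.prime_three]; norm_num
  constructor
  · rintro ℓ (rfl | rfl | rfl)
    · refine gamma_eq_one_of 1 le_rfl (fun _ => 0) (fun _ => 1) ?_ ?_ ?_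
      · intro i _ _; norm_num
      · intro i j h1 h2 h3 h4
        interval_cases i; interval_cases j; norm_num
      · simp [r1]
    · refine gamma_eq_one_of 2 (by norm_num) (fun i => if i = 1 then 0 else 1) (fun _ => 1) ?_ ?_ ?_
      · intro i h1 h2; interval_cases i <;> norm_num
      · intro i j h1 h2 h3 h4
        interval_cases i <;> interval_cases j <;> norm_num
      · norm_num [Finset.sum_Icc_succ_top, r1, r2]
    · refine gamma_eq_one_of 3 (by norm_num)
        (fun i => if i = 1 then 0 else if i = 2 then 1 / 3 else 3 / 4)
        (fun i => if i = 1 then 7 / 12 else if i = 2 then 5 / 6 else 1) ?_ ?_ ?_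
      · intro i h1 h2; interval_cases i <;> norm_num
      · intro i j h1 h2 h3 h4
        interval_cases i <;> interval_cases j <;> norm_num
      · norm_num [Finset.sum_Icc_succ_top, r1, r2, r3]
  · intro ℓ hℓ
    obtain ⟨m, rfl⟩ : ∃ m, ℓ = m + 2 := ⟨ℓ - 2, by omega⟩
    have hm : 2 ≤ m := by omega
    refine lt_of_le_of_lt (gamma_le_of (m + 2) _ fun σ τ h => objective_le_strict m hm σ τ h) ?_
    have hm0 : (0 : ℝ) < m := by exact_mod_cast (by omega : 0 < m)
    apply sub_lt_self
    apply mul_pos <;> rw [sub_pos] <;> apply one_div_lt_one_div_of_lt <;> push_cast <;> linarith
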